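/- Let n_T, n_R, B ≥ 1 be integers, let S_Q ∈ ℂ^{B×B} and S_R ∈ ℂ^{n_R×n_R} be Hermitian positive definite, let R_T ∈ ℂ^{n_T×n_T} be Hermitian positive definite, let 𝓘_T ∈ ℂ^{n_T×n_T} and 𝓘_R ∈ ℂ^{n_R×n_R} be Hermitian positive semidefinite, and let c > 0. Assume the receive covariances coincide: R_R = S_R, and set R = R_T^T ⊗ R_R. For P ∈ ℂ^{n_T×B} set P̃ = P^T ⊗ I_{n_R}. Then R^{-1} + P̃^H (S_Q^T ⊗ S_R)^{-1} P̃ ⪰ c 𝓘_T^T ⊗ 𝓘_R holds if and only if P S_Q^{-1} P^H ⪰ c λ_max(S_R^{1/2} 𝓘_R S_R^{1/2}) 𝓘_T − R_T^{-1}. (Theorem 3, case R_R = S_R.) -/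

import Mathlib

open Matrix Finset
open scoped ComplexOrder Kronecker MatrixOrder

/-- The largest eigenvalue of a Hermitian matrix. -/
noncomputable def lmax {n : ℕ} {A : Matrix (Fin n) (Fin n) ℂ} (hA : A.IsHermitian) : ℝ :=
  ⨆ i, hA.eigenvalues i

/-!
Put `A = R_T⁻¹ + P S_Q⁻¹ Pᴴ` and `M = S_R^{1/2} 𝓘_R S_R^{1/2}`. The left-hand matrix is
`Aᵀ ⊗ S_R⁻¹ - c 𝓘_Tᵀ ⊗ 𝓘_R`, and congruence by `1 ⊗ S_R^{1/2}` turns it into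
`Aᵀ ⊗ 1 - c 𝓘_Tᵀ ⊗ M`. Compressing the latter along a unit eigenvector of `M` for its largest
eigenvalue `l` leaves `(A - c l 𝓘_T)ᵀ`; conversely, it equals
`(A - c l 𝓘_T)ᵀ ⊗ 1 + c 𝓘_Tᵀ ⊗ (l 1 - M)`, where `l 1 - M ⪰ 0`.
-/

section Kronecker

variable {R m n k : Type*} [CommRing R] [StarRing R] [Fintype n]

theorem conjTranspose_one_kronecker_mul_sub_mul [Fintype m] [DecidableEq m] (A C : Matrix m m R)
    (X Y : Matrix n n R) (V : Matrix n k R) :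
    ((1 : Matrix m m R) ⊗ₖ V)ᴴ * (A ⊗ₖ X - C ⊗ₖ Y) * ((1 : Matrix m m R) ⊗ₖ V) =
      A ⊗ₖ (Vᴴ * X * V) - C ⊗ₖ (Vᴴ * Y * V) := by
  simp only [Matrix.mul_sub, Matrix.sub_mul, conjTranspose_kronecker, ← mul_kronecker_mul,
    conjTranspose_one, Matrix.one_mul, Matrix.mul_one]

theorem conjTranspose_kronecker_one_mul_kronecker_mul [Fintype m] [DecidableEq n]
    (A : Matrix m m R) (X : Matrix n n R) (V : Matrix m k R) :
    (V ⊗ₖ (1 : Matrix n n R))ᴴ * (A ⊗ₖ X) * (V ⊗ₖ (1 : Matrix n n R)) = (Vᴴ * A * V) ⊗ₖ X := by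
  simp only [conjTranspose_kronecker, ← mul_kronecker_mul, conjTranspose_one, Matrix.one_mul,
    Matrix.mul_one]

theorem conjTranspose_mul_inv_mul_conjTranspose_mul [DecidableEq n] {T : Matrix n n R}
    (hT : IsUnit T) : Tᴴ * (T * Tᴴ)⁻¹ * T = 1 := by
  have hdet : IsUnit T.det := (isUnit_iff_isUnit_det T).1 hT
  have hdet' : IsUnit Tᴴ.det := (isUnit_iff_isUnit_det Tᴴ).1 hT.star
  rw [Matrix.mul_inv_rev, mul_nonsing_inv_cancel_left _ _ hdet', nonsing_inv_mul _ hdet]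

variable [PartialOrder R] [Finite m] {A C : Matrix m m R} {X Y : Matrix n n R}

theorem posSemidef_kronecker_sub_kronecker_iff_of_isUnit [DecidableEq n] {T : Matrix n n R}
    (hT : IsUnit T) :
    (A ⊗ₖ X - C ⊗ₖ Y).PosSemidef ↔ (A ⊗ₖ (Tᴴ * X * T) - C ⊗ₖ (Tᴴ * Y * T)).PosSemidef := by
  classical
  have := Fintype.ofFinite m
  have hK : IsUnit ((1 : Matrix m m R) ⊗ₖ T) := Matrix.IsUnit.kronecker isUnit_one hT
  rw [← conjTranspose_one_kronecker_mul_sub_mul, ← star_eq_conjTranspose,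
    Matrix.IsUnit.posSemidef_star_left_conjugate_iff hK]

theorem posSemidef_smul_sub_smul_of_kronecker_sub_kronecker
    (h : (A ⊗ₖ X - C ⊗ₖ Y).PosSemidef) (v : n → R) :
    ((star v ⬝ᵥ X *ᵥ v) • A - (star v ⬝ᵥ Y *ᵥ v) • C).PosSemidef := by
  classical
  have := Fintype.ofFinite m
  have hcompr := h.conjTranspose_mul_mul_same ((1 : Matrix m m R) ⊗ₖ replicateCol Unit v)
  rw [conjTranspose_one_kronecker_mul_sub_mul] at hcompr
  have hentry (N : Matrix n n R) :
      ((replicateCol Unit v)ᴴ * N * replicateCol Unit v) () () = star v ⬝ᵥ N *ᵥ v := by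
    rw [Matrix.mul_assoc]
    rfl
  convert hcompr.submatrix (fun i ↦ (i, ())) using 1
  ext i j
  simp only [Matrix.sub_apply, Matrix.smul_apply, smul_eq_mul, submatrix_apply, kronecker_apply,
    hentry, mul_comm]

end Kronecker

section Eigenvalues

theorem star_dotProduct_self_of_norm_eq_one {𝕜 n : Type*} [RCLike 𝕜] [Fintype n]
    {x : EuclideanSpace 𝕜 n} (hx : ‖x‖ = 1) : star ⇑x ⬝ᵥ ⇑x = 1 := by
  rw [dotProduct_comm, ← EuclideanSpace.inner_eq_star_dotProduct, inner_self_eq_norm_sq_to_K,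
    hx, RCLike.ofReal_one, one_pow]

variable {𝕜 m n : Type*} [RCLike 𝕜] [Finite m] [Fintype n] [DecidableEq n]
  {M : Matrix n n 𝕜} {A C : Matrix m m 𝕜}

theorem posSemidef_iSup_eigenvalues_smul_one_sub (hM : M.IsHermitian) :
    ((⨆ i, hM.eigenvalues i) • (1 : Matrix n n 𝕜) - M).PosSemidef := by
  rw [← Matrix.le_iff, ← Algebra.algebraMap_eq_smul_one]
  refine le_algebraMap_of_spectrum_le (fun x hx ↦ ?_) hM
  obtain ⟨i, rfl⟩ := hM.spectrum_real_eq_range_eigenvalues ▸ hx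
  exact le_ciSup (Set.finite_range _).bddAbove i

theorem posSemidef_sub_eigenvalues_smul_of_kronecker_one_sub_kronecker (hM : M.IsHermitian)
    (h : (A ⊗ₖ (1 : Matrix n n 𝕜) - C ⊗ₖ M).PosSemidef) (i : n) :
    (A - hM.eigenvalues i • C).PosSemidef := by
  have hcompr := posSemidef_smul_sub_smul_of_kronecker_sub_kronecker h (hM.eigenvectorBasis i)
  rwa [one_mulVec, hM.mulVec_eigenvectorBasis, dotProduct_smul,
    star_dotProduct_self_of_norm_eq_one (hM.eigenvectorBasis.orthonormal.1 i), one_smul,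
    smul_assoc, one_smul] at hcompr

theorem posSemidef_kronecker_one_sub_kronecker_iff [Nonempty n] (hC : C.PosSemidef)
    (hM : M.IsHermitian) :
    (A ⊗ₖ (1 : Matrix n n 𝕜) - C ⊗ₖ M).PosSemidef ↔
      (A - (⨆ i, hM.eigenvalues i) • C).PosSemidef := by
  set l := ⨆ i, hM.eigenvalues i
  constructor <;> intro h
  · obtain ⟨i, hi⟩ : ∃ i, hM.eigenvalues i = l := exists_eq_ciSup_of_finite
    exact hi ▸ posSemidef_sub_eigenvalues_smul_of_kronecker_one_sub_kronecker hM h i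
  · have hsplit : A ⊗ₖ (1 : Matrix n n 𝕜) - C ⊗ₖ M =
        (A - l • C) ⊗ₖ (1 : Matrix n n 𝕜) + C ⊗ₖ (l • (1 : Matrix n n 𝕜) - M) := by
      rw [sub_eq_iff_eq_add, add_assoc, ← kronecker_add, sub_add_cancel, kronecker_smul,
        ← smul_kronecker, ← add_kronecker, sub_add_cancel]
    rw [hsplit]
    exact (h.kronecker .one).add (hC.kronecker (posSemidef_iSup_eigenvalues_smul_one_sub hM))

end Eigenvalues

section Constraint

variable {𝕜 m n p : Type*} [RCLike 𝕜] [Finite m] [Fintype n] [DecidableEq n] [Nonempty n]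

theorem posSemidef_kronecker_inv_sub_kronecker_iff {A C : Matrix m m 𝕜} {S J : Matrix n n 𝕜}
    (hC : C.PosSemidef) (hS : S.PosDef) (hM : (CFC.sqrt S * J * CFC.sqrt S).IsHermitian) :
    (A ⊗ₖ S⁻¹ - C ⊗ₖ J).PosSemidef ↔ (A - (⨆ i, hM.eigenvalues i) • C).PosSemidef := by
  have hS0 : 0 ≤ S := hS.posSemidef.nonneg
  have hself : (CFC.sqrt S)ᴴ = CFC.sqrt S := (CFC.sqrt_nonneg S).posSemidef.isHermitian
  have hunit : IsUnit (CFC.sqrt S) := (CFC.isUnit_sqrt_iff S hS0).2 hS.isUnit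
  have hone : CFC.sqrt S * S⁻¹ * CFC.sqrt S = 1 := by
    simpa only [hself, CFC.sqrt_mul_sqrt_self S hS0] using
      conjTranspose_mul_inv_mul_conjTranspose_mul hunit
  rw [posSemidef_kronecker_sub_kronecker_iff_of_isUnit hunit, hself, hone,
    posSemidef_kronecker_one_sub_kronecker_iff hC hM]

-- `K`, `Q`, `S`, `I`, `J` play the roles of `R_T⁻¹`, `S_Q⁻¹`, `S_R`, `𝓘_T`, `𝓘_R`.
theorem stmt3_general [Fintype p] {S : Matrix n n 𝕜} (hS : S.PosDef) (K : Matrix m m 𝕜)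
    (Q : Matrix p p 𝕜) {I : Matrix m m 𝕜} (hI : I.PosSemidef) {J : Matrix n n 𝕜} {c : ℝ}
    (hc : 0 ≤ c) (P : Matrix m p 𝕜) (hM : (CFC.sqrt S * J * CFC.sqrt S).IsHermitian) :
    (Kᵀ ⊗ₖ S⁻¹ +
        (Pᵀ ⊗ₖ (1 : Matrix n n 𝕜))ᴴ * (Qᵀ ⊗ₖ S⁻¹) * (Pᵀ ⊗ₖ (1 : Matrix n n 𝕜))
      - c • (Iᵀ ⊗ₖ J)).PosSemidef ↔
    (P * Q * Pᴴ - ((c * ⨆ i, hM.eigenvalues i) • I - K)).PosSemidef := by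
  have hlhs : Kᵀ ⊗ₖ S⁻¹ +
        (Pᵀ ⊗ₖ (1 : Matrix n n 𝕜))ᴴ * (Qᵀ ⊗ₖ S⁻¹) * (Pᵀ ⊗ₖ (1 : Matrix n n 𝕜)) =
      (P * Q * Pᴴ + K)ᵀ ⊗ₖ S⁻¹ := by
    rw [conjTranspose_kronecker_one_mul_kronecker_mul, ← add_kronecker, transpose_add,
      transpose_mul, transpose_mul, conjTranspose_transpose_eq_transpose_conjTranspose,
      Matrix.mul_assoc, add_comm]
  have hrhs : P * Q * Pᴴ - ((c * ⨆ i, hM.eigenvalues i) • I - K) =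
      ((P * Q * Pᴴ + K)ᵀ - (⨆ i, hM.eigenvalues i) • c • Iᵀ)ᵀ := by
    rw [transpose_sub, transpose_smul, transpose_smul, transpose_transpose, transpose_transpose,
      smul_smul, mul_comm c, sub_sub_eq_add_sub]
  rw [hlhs, hrhs, posSemidef_transpose_iff, ← smul_kronecker,
    posSemidef_kronecker_inv_sub_kronecker_iff (hI.transpose.smul hc) hS hM]

end Constraint

/-- Theorem 3 (case `R_R = S_R`): with `R = R_Tᵀ ⊗ R_R` and `R_R = S_R`, the constraint
`R⁻¹ + P̃ᴴ (S_Qᵀ ⊗ S_R)⁻¹ P̃ ⪰ c 𝓘_Tᵀ ⊗ 𝓘_R` (with `P̃ = Pᵀ ⊗ I`) holds iff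
`P S_Q⁻¹ Pᴴ ⪰ c λ_max(S_R^{1/2} 𝓘_R S_R^{1/2}) 𝓘_T − R_T⁻¹`. -/
theorem stmt3 (nT nR B : ℕ) (hnT : 1 ≤ nT) (hnR : 1 ≤ nR) (hB : 1 ≤ B)
    (SQ : Matrix (Fin B) (Fin B) ℂ) (hSQ : SQ.PosDef)
    (SR : Matrix (Fin nR) (Fin nR) ℂ) (hSR : SR.PosDef)
    (RT : Matrix (Fin nT) (Fin nT) ℂ) (hRT : RT.PosDef)
    (IT : Matrix (Fin nT) (Fin nT) ℂ) (hIT : IT.PosSemidef)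
    (IR : Matrix (Fin nR) (Fin nR) ℂ) (hIR : IR.PosSemidef)
    (c : ℝ) (hc : 0 < c)
    (P : Matrix (Fin nT) (Fin B) ℂ)
    (hM : (CFC.sqrt SR * IR * CFC.sqrt SR).IsHermitian) :
    ((RTᵀ ⊗ₖ SR)⁻¹ +
        (Pᵀ ⊗ₖ (1 : Matrix (Fin nR) (Fin nR) ℂ))ᴴ * (SQᵀ ⊗ₖ SR)⁻¹ *
          (Pᵀ ⊗ₖ (1 : Matrix (Fin nR) (Fin nR) ℂ))
      - ((c : ℂ) • (ITᵀ ⊗ₖ IR))).PosSemidef ↔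
    (P * SQ⁻¹ * Pᴴ - (((c * lmax hM : ℝ) : ℂ) • IT - RT⁻¹)).PosSemidef := by
  have : Nonempty (Fin nR) := ⟨⟨0, hnR⟩⟩
  simpa only [inv_kronecker, transpose_nonsing_inv, Complex.coe_smul, lmax] using
    stmt3_general hSR RT⁻¹ SQ⁻¹ hIT hc.le P hM
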